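/- For every r ≥ 2 and every fixed ordered r-matching H of size k, the probability that RM_n^(r) contains a copy of H (that is, a subfamily N ⊆ RM_n^(r) of k edges such that the unique order-preserving bijection from the union of the edges of N onto [rk] maps N onto H) tends to 1 as n → ∞. -/

import Mathlib

open Finset
open scoped Classical

/-- An ordered `r`-matching of size `n`: a partition of `[r*n] = {1,…,r*n}` into `n`
pairwise disjoint `r`-element subsets (the edges). -/
def IsOrderedMatching (r n : ℕ) (M : Finset (Finset ℕ)) : Prop :=
  M.card = n ∧ (∀ e ∈ M, e.card = r) ∧
  (∀ e ∈ M, ∀ f ∈ M, e ≠ f → Disjoint e f) ∧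
  M.biUnion id = Finset.Icc 1 (r * n)

/-- Two disjoint `r`-element sets `e`, `f` form the `r`-pattern `P`: the unique
order-preserving bijection from `e ∪ f` onto `[2r]` maps the pair `{e, f}` onto `P`. -/
def FormsPattern (r : ℕ) (e f : Finset ℕ) (P : Finset (Finset ℕ)) : Prop :=
  ∃ φ : ℕ → ℕ, StrictMonoOn φ ↑(e ∪ f) ∧
    (e ∪ f).image φ = Finset.Icc 1 (2 * r) ∧
    ({e.image φ, f.image φ} : Finset (Finset ℕ)) = P

/-- A `Ps`-clique: a family of pairwise disjoint `r`-element subsets of `ℕ`, every two of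
which form a pattern belonging to `Ps`. -/
def IsClique (r : ℕ) (Ps : Set (Finset (Finset ℕ))) (K : Finset (Finset ℕ)) : Prop :=
  (∀ e ∈ K, e.card = r) ∧ (∀ e ∈ K, ∀ f ∈ K, e ≠ f → Disjoint e f) ∧
  (∀ e ∈ K, ∀ f ∈ K, e ≠ f → ∃ P ∈ Ps, FormsPattern r e f P)

/-- `z_Ps(M)`: the maximum size of a subfamily of `M` that is a `Ps`-clique. -/
noncomputable def zClique (r : ℕ) (Ps : Set (Finset (Finset ℕ))) (M : Finset (Finset ℕ)) : ℕ :=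
  sSup {k | ∃ K : Finset (Finset ℕ), K ⊆ M ∧ IsClique r Ps K ∧ K.card = k}

/-- All ordered `r`-matchings of size `n` (as a finset). -/
noncomputable def matchingFamilies (r n : ℕ) : Finset (Finset (Finset ℕ)) :=
  ((Finset.Icc 1 (r * n)).powerset.powerset).filter (IsOrderedMatching r n)

/-- The probability of the event `A` for a uniformly random ordered `r`-matching of size `n`. -/
noncomputable def prob (r n : ℕ) (A : Finset (Finset ℕ) → Prop) : ℝ :=
  (((matchingFamilies r n).filter A).card : ℝ) / ((matchingFamilies r n).card : ℝ)

/-- Expectation of `X` with respect to a uniformly random ordered `r`-matching of size `n`. -/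
noncomputable def expect (r n : ℕ) (X : Finset (Finset ℕ) → ℝ) : ℝ :=
  (∑ M ∈ matchingFamilies r n, X M) / ((matchingFamilies r n).card : ℝ)

/-- An `r`-partite `r`-pattern: each edge contains exactly one of `{2i-1, 2i}` for each
`i = 1, …, r`. -/
def IsPartitePattern (r : ℕ) (P : Finset (Finset ℕ)) : Prop :=
  IsOrderedMatching r 2 P ∧
  ∀ e ∈ P, ∀ i ∈ Finset.Icc 1 r, (e ∩ {2 * i - 1, 2 * i}).card = 1

/-- An `r`-pattern `P` is collectable if there exist arbitrarily large `{P}`-cliques. -/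
def Collectable (r : ℕ) (P : Finset (Finset ℕ)) : Prop :=
  ∀ k : ℕ, ∃ K : Finset (Finset ℕ), IsClique r {P} K ∧ K.card = k

/-- The word of a pattern `P` over `{A=true, B=false}`: the `j`-th letter is `true` iff
vertex `j` lies in the edge of `P` containing `1`. -/
noncomputable def patternWord (r : ℕ) (P : Finset (Finset ℕ)) : List Bool :=
  (List.range (2 * r)).map (fun j => decide (∃ e ∈ P, 1 ∈ e ∧ j + 1 ∈ e))

/-- `lam` is a splitting of the word `w` into consecutive blocks of the form
`A^t B^t` or `B^t A^t` with half-lengths given by `lam`. -/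
def IsBlockSplitting (w : List Bool) (lam : List ℕ) : Prop :=
  (∀ t ∈ lam, 1 ≤ t) ∧
  ∃ bs : List Bool, bs.length = lam.length ∧
    w = (List.zipWith (fun t b => List.replicate t b ++ List.replicate t !b) lam bs).flatten

/-- The pattern `P` has composition `lam` (the sequence of half-lengths of the blocks of
its unique splitting). -/
def HasComposition (r : ℕ) (P : Finset (Finset ℕ)) (lam : List ℕ) : Prop :=
  IsBlockSplitting (patternWord r P) lam

/-- Two distinct collectable `r`-patterns are harmonious if they have the same composition. -/
def Harmonious (r : ℕ) (P Q : Finset (Finset ℕ)) : Prop :=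
  P ≠ Q ∧ Collectable r P ∧ Collectable r Q ∧
  ∃ lam : List ℕ, HasComposition r P lam ∧ HasComposition r Q lam

/-- A pair of distinct `r`-patterns is a mismatch if exactly one of them is collectable, or
both are collectable but their compositions differ. -/
def Mismatch (r : ℕ) (P Q : Finset (Finset ℕ)) : Prop :=
  P ≠ Q ∧
  ((Collectable r P ∧ ¬ Collectable r Q) ∨
   (¬ Collectable r P ∧ Collectable r Q) ∨
   (Collectable r P ∧ Collectable r Q ∧
     ¬ ∃ lam : List ℕ, HasComposition r P lam ∧ HasComposition r Q lam))

/-- The trace of an ordered `r`-matching of size `k` on `[rk]`: the `j`-th letter equals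
`i` when `j` is the `i`-th smallest element of the edge containing `j`. -/
noncomputable def trace (r k : ℕ) (M : Finset (Finset ℕ)) : List ℕ :=
  (List.range (r * k)).map (fun j₀ =>
    ((Finset.Icc 1 (r * k)).filter
      (fun x => x ≤ j₀ + 1 ∧ ∃ e ∈ M, j₀ + 1 ∈ e ∧ x ∈ e)).card)

/-- `a_Ps(k)`: the number of `Ps`-cliques of size `k` whose edges partition `[rk]`. -/
noncomputable def cliqueCount (r : ℕ) (Ps : Set (Finset (Finset ℕ))) (k : ℕ) : ℕ :=
  (((Finset.Icc 1 (r * k)).powerset.powerset).filter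
    (fun M => IsOrderedMatching r k M ∧ IsClique r Ps M)).card

/-- The maximum size of any `Ps`-clique whatsoever. -/
noncomputable def maxCliqueSize (r : ℕ) (Ps : Set (Finset (Finset ℕ))) : ℕ :=
  sSup {k | ∃ K : Finset (Finset ℕ), IsClique r Ps K ∧ K.card = k}

/-- `M` contains a copy of the ordered `r`-matching `H` of size `k`: a subfamily `N ⊆ M` of
`k` edges such that the order-preserving bijection from the union of the edges of `N`
onto `[rk]` maps `N` onto `H`. -/
def ContainsCopy (r k : ℕ) (H M : Finset (Finset ℕ)) : Prop :=
  ∃ N ⊆ M, N.card = k ∧ ∃ φ : ℕ → ℕ,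
    StrictMonoOn φ ↑(N.biUnion id) ∧
    (N.biUnion id).image φ = Finset.Icc 1 (r * k) ∧
    N.image (fun e => e.image φ) = H

/-- Delete the `j`-th smallest element of the finite set `e`. -/
def deleteJth (j : ℕ) (e : Finset ℕ) : Finset ℕ :=
  e.filter (fun x => (e.filter (· ≤ x)).card ≠ j)

/-- Relabel the elements of `e` order-preservingly by their ranks in `V`. -/
def relabel (V : Finset ℕ) (e : Finset ℕ) : Finset ℕ :=
  e.image (fun x => (V.filter (· ≤ x)).card)

/-- `S^(−j)`: delete from each edge of the pattern `S` its `j`-th smallest element and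
relabel the remaining vertices order-preservingly. -/
def patternDelete (j : ℕ) (S : Finset (Finset ℕ)) : Finset (Finset ℕ) :=
  (S.image (deleteJth j)).image (relabel ((S.image (deleteJth j)).biUnion id))


/-- Parametrization of the vertices of an ordered matching by edges and positions. -/
lemma exists_param {r n : ℕ} {M : Finset (Finset ℕ)} (hM : IsOrderedMatching r n M) :
    ∃ g : Fin n × Fin r → ℕ, Function.Injective g ∧
      (∀ a, (univ.image fun b => g (a, b)) ∈ M) ∧
      (M = univ.image fun a => univ.image fun b => g (a, b)) ∧
      (univ.image g = Finset.Icc 1 (r * n)) := by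
  obtain ⟨h1, h2, h3, h4⟩ := hM
  let E : Fin n ≃ M := (Finset.equivFinOfCardEq h1).symm
  let e : ∀ a : Fin n, Fin r ≃ (E a : Finset ℕ) := fun a =>
    (Finset.equivFinOfCardEq (h2 (E a) (E a).2)).symm
  have him : ∀ a, (univ.image fun b => ((e a b : (E a : Finset ℕ)) : ℕ)) = (E a : Finset ℕ) := by
    intro a
    ext x
    simp only [mem_image, mem_univ, true_and]
    constructor
    · rintro ⟨b, rfl⟩
      exact (e a b).2
    · intro hx
      exact ⟨(e a).symm ⟨x, hx⟩, by simp⟩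
  have hMeq : M = univ.image fun a => univ.image fun b => ((e a b : (E a : Finset ℕ)) : ℕ) := by
    ext x
    simp only [mem_image, mem_univ, true_and, him]
    constructor
    · intro hx
      exact ⟨E.symm ⟨x, hx⟩, by simp⟩
    · rintro ⟨a, rfl⟩
      exact (E a).2
  refine ⟨fun p => (e p.1 p.2 : ℕ), ?_, ?_, hMeq, ?_⟩
  · rintro ⟨a, b⟩ ⟨a', b'⟩ hab
    simp only at hab
    have haa : a = a' := by
      by_contra hne
      have hE : (E a : Finset ℕ) ≠ E a' := fun h => hne (E.injective (Subtype.ext h))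
      have hd := h3 _ (E a).2 _ (E a').2 hE
      exact (Finset.disjoint_left.mp hd (e a b).2) (hab ▸ (e a' b').2)
    subst haa
    have := (e a).injective (Subtype.ext hab)
    rw [this]
  · intro a
    simp only [him]
    exact (E a).2
  · rw [← h4]
    ext x
    simp only [mem_image, mem_univ, true_and, mem_biUnion, id]
    constructor
    · rintro ⟨⟨a, b⟩, rfl⟩
      exact ⟨E a, (E a).2, (e a b).2⟩
    · rintro ⟨s, hs, hx⟩
      have hx' : x ∈ (E (E.symm ⟨s, hs⟩) : Finset ℕ) := by simpa using hx
      rw [← him] at hx'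
      simp only [mem_image, mem_univ, true_and] at hx'
      obtain ⟨b, hb⟩ := hx'
      exact ⟨(_, b), hb⟩

/-- Two injective labellings can be made order isomorphic by a permutation. -/
lemma exists_perm_order {K : Type*} [Fintype K] (q h : K → ℕ)
    (hq : Function.Injective q) (hh : Function.Injective h) :
    ∃ p : Equiv.Perm K, ∀ x y, h x < h y ↔ q (p x) < q (p y) := by
  let Q := Equiv.ofInjective q hq
  let P := Equiv.ofInjective h hh
  have cQ : Fintype.card (Set.range q) = Fintype.card K := Fintype.card_congr Q.symm
  have cP : Fintype.card (Set.range h) = Fintype.card K := Fintype.card_congr P.symm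
  let oQ := Fintype.orderIsoFinOfCardEq (Set.range q) cQ
  let oP := Fintype.orderIsoFinOfCardEq (Set.range h) cP
  let o : Set.range h ≃o Set.range q := oP.symm.trans oQ
  refine ⟨(P.trans o.toEquiv).trans Q.symm, fun x y => ?_⟩
  have key : ∀ x, q (((P.trans o.toEquiv).trans Q.symm) x) = (o (P x) : ℕ) := by
    intro x
    have : Q (Q.symm (o (P x))) = o (P x) := Q.apply_symm_apply _
    exact congrArg Subtype.val this
  rw [key, key, Subtype.coe_lt_coe, OrderIso.lt_iff_lt]
  exact Iff.rfl

lemma containsCopy_of_order {r k : ℕ} {H M : Finset (Finset ℕ)}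
    (h q : Fin k × Fin r → ℕ) (hr : 0 < r)
    (hq : Function.Injective q)
    (hH : H = univ.image fun a => univ.image fun b => h (a, b))
    (hI : univ.image h = Finset.Icc 1 (r * k))
    (hM : ∀ a, (univ.image fun b => q (a, b)) ∈ M)
    (ho : ∀ x y, h x < h y ↔ q x < q y) : ContainsCopy r k H M := by
  let φ : ℕ → ℕ := Function.extend q h id
  have hφ : ∀ x, φ (q x) = h x := fun x => hq.extend_apply _ _ _
  have hU : (univ.image fun a => univ.image fun b => q (a, b)).biUnion id = univ.image q := by
    ext x
    simp
  refine ⟨univ.image fun a => univ.image fun b => q (a, b), ?_, ?_, φ, ?_, ?_, ?_⟩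
  · intro s hs
    simp only [mem_image, mem_univ, true_and] at hs
    obtain ⟨a, rfl⟩ := hs
    exact hM a
  · rw [Finset.card_image_of_injective, Finset.card_univ, Fintype.card_fin]
    intro a a' haa
    have : q (a, ⟨0, hr⟩) ∈ univ.image fun b => q (a', b) := by
      rw [← show (univ.image fun b => q (a, b)) = univ.image fun b => q (a', b) from haa]
      exact Finset.mem_image_of_mem (fun b => q (a, b)) (Finset.mem_univ _)
    simp only [mem_image, mem_univ, true_and] at this
    obtain ⟨b, hb⟩ := this
    exact (congrArg Prod.fst (hq hb)).symm
  · rw [hU]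
    intro x hx y hy hxy
    simp only [coe_image, coe_univ, Set.image_univ, Set.mem_range] at hx hy
    obtain ⟨x, rfl⟩ := hx
    obtain ⟨y, rfl⟩ := hy
    rw [hφ, hφ]
    exact (ho x y).2 hxy
  · rw [hU, Finset.image_image, ← hI]
    congr 1
    funext x
    exact hφ x
  · rw [hH, Finset.image_image]
    congr 1
    funext a
    simp only [Function.comp_apply, Finset.image_image]
    congr 1
    funext b
    exact hφ (a, b)

/-- Action of a permutation of the vertex set on a family of sets. -/
noncomputable def actFam {N : ℕ} (s : Equiv.Perm (Finset.Icc 1 N))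
    (M : Finset (Finset ℕ)) : Finset (Finset ℕ) :=
  M.image fun e => e.image (Equiv.Perm.ofSubtype s)

lemma actFam_mul {N : ℕ} (s t : Equiv.Perm (Finset.Icc 1 N)) (M : Finset (Finset ℕ)) :
    actFam (s * t) M = actFam s (actFam t M) := by
  simp only [actFam, Finset.image_image, map_mul]
  congr 1
  funext e
  simp only [Function.comp, Finset.image_image, Equiv.Perm.coe_mul]

lemma actFam_one {N : ℕ} (M : Finset (Finset ℕ)) :
    actFam (1 : Equiv.Perm (Finset.Icc 1 N)) M = M := by
  simp [actFam]

lemma ofSubtype_image {N : ℕ} (s : Equiv.Perm (Finset.Icc 1 N)) :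
    (Finset.Icc 1 N).image (Equiv.Perm.ofSubtype s) = Finset.Icc 1 N := by
  apply Finset.eq_of_subset_of_card_le
  · intro x hx
    obtain ⟨y, hy, rfl⟩ := Finset.mem_image.1 hx
    rw [Equiv.Perm.ofSubtype_apply_of_mem s hy]
    exact (s ⟨y, hy⟩).2
  · rw [Finset.card_image_of_injective _ (Equiv.injective _)]

lemma mem_matchingFamilies {r n : ℕ} {M : Finset (Finset ℕ)} :
    M ∈ matchingFamilies r n ↔ IsOrderedMatching r n M := by
  simp only [matchingFamilies, mem_filter, mem_powerset, and_iff_right_iff_imp]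
  intro h e he
  rw [mem_powerset, ← h.2.2.2]
  exact Finset.subset_biUnion_of_mem id he

lemma actFam_mem {r n : ℕ} (s : Equiv.Perm (Finset.Icc 1 (r * n))) {M : Finset (Finset ℕ)}
    (hM : M ∈ matchingFamilies r n) : actFam s M ∈ matchingFamilies r n := by
  rw [mem_matchingFamilies] at *
  obtain ⟨h1, h2, h3, h4⟩ := hM
  have hinj : Function.Injective (Equiv.Perm.ofSubtype s) := Equiv.injective _
  refine ⟨?_, ?_, ?_, ?_⟩
  · rw [actFam, Finset.card_image_of_injective _ (Finset.image_injective hinj), h1]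
  · intro e he
    obtain ⟨e, he', rfl⟩ := Finset.mem_image.1 he
    rw [Finset.card_image_of_injective _ hinj, h2 e he']
  · intro e he f hf hne
    obtain ⟨e, he', rfl⟩ := Finset.mem_image.1 he
    obtain ⟨f, hf', rfl⟩ := Finset.mem_image.1 hf
    rw [Finset.disjoint_image hinj]
    exact h3 e he' f hf' (fun h => hne (by rw [h]))
  · have h5 := congrArg (fun A => A.image (Equiv.Perm.ofSubtype s)) h4
    simp only [ofSubtype_image s] at h5
    rw [← h5, actFam, Finset.image_biUnion, Finset.biUnion_image]
    rfl

/-- For a fixed matching: few block permutations avoid a copy of `H`. -/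
lemma exists_block_perm {r k n m : ℕ} (hr : 0 < r) (hm : m * k ≤ n)
    {H M : Finset (Finset ℕ)}
    (hH : IsOrderedMatching r k H) (hM : IsOrderedMatching r n M) :
    ∃ Θ : (Fin m → Equiv.Perm (Fin k × Fin r)) → Equiv.Perm (Finset.Icc 1 (r * n)),
      ∀ s : Equiv.Perm (Finset.Icc 1 (r * n)),
        (univ.filter fun t => ¬ ContainsCopy r k H (actFam (s * Θ t) M)).card ≤
          (Fintype.card (Equiv.Perm (Fin k × Fin r)) - 1) ^ m := by
  obtain ⟨h, hhinj, -, hHeq, hI⟩ := exists_param hH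
  obtain ⟨g, hginj, hgM, -, hgI⟩ := exists_param hM
  let c : Fin m × Fin k → Fin n := fun p => Fin.castLE hm (finProdFinEquiv p)
  have hc : Function.Injective c := fun p p' hp =>
    finProdFinEquiv.injective (Fin.castLE_injective hm hp)
  have hgmem : ∀ p, g p ∈ Finset.Icc 1 (r * n) := fun p => by
    rw [← hgI]; exact Finset.mem_image_of_mem g (Finset.mem_univ p)
  let f : Fin m × (Fin k × Fin r) ↪ Finset.Icc 1 (r * n) :=
    ⟨fun p => ⟨g (c (p.1, p.2.1), p.2.2), hgmem _⟩, by
      rintro ⟨i, a, b⟩ ⟨i', a', b'⟩ hp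
      have h1 := hginj (congrArg Subtype.val hp)
      simp only [Prod.mk.injEq] at h1
      have h2 := hc h1.1
      simp only [Prod.mk.injEq] at h2
      simp [h1.2, h2.1, h2.2]⟩
  refine ⟨fun t => Equiv.Perm.viaEmbedding (Equiv.prodCongrRight t) f, fun s => ?_⟩
  have hsf : ∀ i, Function.Injective fun x => ((s (f (i, x)) : Finset.Icc 1 (r * n)) : ℕ) := by
    intro i x y hxy
    have := f.injective (s.injective (Subtype.ext hxy))
    simpa using this
  choose p hp using fun i => exists_perm_order _ h (hsf i) hhinj
  have hsub : (univ.filter fun t : Fin m → Equiv.Perm (Fin k × Fin r) =>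
      ¬ ContainsCopy r k H (actFam (s *
        Equiv.Perm.viaEmbedding (Equiv.prodCongrRight t) f) M)) ⊆
      Fintype.piFinset fun i => univ.erase (p i) := by
    intro t ht
    rw [mem_filter] at ht
    rw [Fintype.mem_piFinset]
    intro i
    rw [mem_erase]
    refine ⟨fun hti => ht.2 ?_, mem_univ _⟩
    refine containsCopy_of_order h (fun x => ((s (f (i, p i x)) : Finset.Icc 1 (r * n)) : ℕ)) hr
      (fun x y hxy => (p i).injective (hsf i hxy)) hHeq hI ?_ (hp i)
    intro a
    refine Finset.mem_image.2 ⟨_, hgM (c (i, a)), ?_⟩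
    rw [Finset.image_image]
    congr 1
    funext b
    simp only [Function.comp]
    rw [Equiv.Perm.ofSubtype_apply_of_mem _ (hgmem _)]
    have : (⟨g (c (i, a), b), hgmem _⟩ : Finset.Icc 1 (r * n)) = f (i, (a, b)) := rfl
    rw [this, Equiv.Perm.mul_apply, Equiv.Perm.viaEmbedding_apply]
    simp [hti]
  refine (Finset.card_le_card hsub).trans ?_
  rw [Fintype.card_piFinset]
  simp [Finset.card_erase_of_mem]

lemma bad_bound {r k n m : ℕ} (hr : 0 < r) (hm : m * k ≤ n)
    {H : Finset (Finset ℕ)} (hH : IsOrderedMatching r k H) :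
    ((matchingFamilies r n).filter fun M => ¬ ContainsCopy r k H M).card *
      Fintype.card (Equiv.Perm (Fin k × Fin r)) ^ m ≤
    (matchingFamilies r n).card * (Fintype.card (Equiv.Perm (Fin k × Fin r)) - 1) ^ m := by
  let G := Equiv.Perm (Finset.Icc 1 (r * n))
  let T := Fin m → Equiv.Perm (Fin k × Fin r)
  set F := Fintype.card (Equiv.Perm (Fin k × Fin r)) with hF
  let B : Finset (Finset ℕ) → ℕ := fun M => if ¬ ContainsCopy r k H M then 1 else 0
  have hex : ∀ M : Finset (Finset ℕ), ∃ Θ : T → G, M ∈ matchingFamilies r n →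
      ∀ s : G, ∑ t, B (actFam (s * Θ t) M) ≤ (F - 1) ^ m := by
    intro M
    by_cases hM : M ∈ matchingFamilies r n
    · obtain ⟨Θ, hΘ⟩ := exists_block_perm hr hm hH (mem_matchingFamilies.1 hM)
      refine ⟨Θ, fun _ s => ?_⟩
      have := hΘ s
      rw [Finset.card_filter] at this
      exact this
    · exact ⟨fun _ => 1, fun h => absurd h hM⟩
  choose Θ hΘ using hex
  have hT : Fintype.card T = F ^ m := by simp [T, hF]
  have h1 : ∑ M ∈ matchingFamilies r n, ∑ s : G, ∑ t : T, B (actFam (s * Θ M t) M) ≤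
      (matchingFamilies r n).card * (Fintype.card G * (F - 1) ^ m) := by
    refine Finset.sum_le_card_nsmul _ _ _ fun M hM => ?_
    exact Finset.sum_le_card_nsmul _ _ _ fun s _ => hΘ M hM s
  have h2 : ∑ M ∈ matchingFamilies r n, ∑ s : G, ∑ t : T, B (actFam (s * Θ M t) M) =
      Fintype.card G * (((matchingFamilies r n).filter fun M => ¬ ContainsCopy r k H M).card *
        F ^ m) := by
    have e1 : ∀ M, ∑ s : G, ∑ t : T, B (actFam (s * Θ M t) M) =
        ∑ s : G, F ^ m * B (actFam s M) := by
      intro M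
      rw [Finset.sum_comm, ← Finset.mul_sum, ← hT]
      refine Eq.trans ?_ (smul_eq_mul (Fintype.card T) _)
      rw [← Finset.card_univ, ← Finset.sum_const]
      refine Finset.sum_congr rfl fun t _ => ?_
      exact Equiv.sum_comp (Equiv.mulRight (Θ M t)) fun s => B (actFam s M)
    rw [Finset.sum_congr rfl fun M _ => e1 M, Finset.sum_comm]
    refine Eq.trans ?_ (smul_eq_mul (Fintype.card G) _)
    rw [← Finset.card_univ, ← Finset.sum_const]
    refine Finset.sum_congr rfl fun s _ => ?_
    rw [← Finset.mul_sum, mul_comm, Finset.card_filter]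
    congr 1
    refine Finset.sum_nbij' (actFam s) (actFam s⁻¹) (fun M hM => actFam_mem s hM)
      (fun M hM => actFam_mem _ hM) ?_ ?_ ?_
    · intro M _
      rw [← actFam_mul, inv_mul_cancel, actFam_one]
    · intro M _
      rw [← actFam_mul, mul_inv_cancel, actFam_one]
    · intro M _
      rfl
  rw [h2, mul_left_comm (matchingFamilies r n).card] at h1
  exact Nat.le_of_mul_le_mul_left h1 Fintype.card_pos

lemma matchingFamilies_nonempty {r : ℕ} (hr : 0 < r) (n : ℕ) :
    (matchingFamilies r n).Nonempty := by
  let g : Fin n × Fin r → ℕ := fun p => (finProdFinEquiv p : ℕ) + 1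
  have hg : Function.Injective g := fun p q h =>
    finProdFinEquiv.injective (Fin.ext (Nat.succ_injective h))
  refine ⟨univ.image fun a => univ.image fun b => g (a, b), mem_matchingFamilies.2 ⟨?_, ?_, ?_, ?_⟩⟩
  · rw [Finset.card_image_of_injective, Finset.card_univ, Fintype.card_fin]
    intro a a' haa
    have : g (a, ⟨0, hr⟩) ∈ univ.image fun b => g (a', b) := by
      rw [← show (univ.image fun b => g (a, b)) = univ.image fun b => g (a', b) from haa]
      exact Finset.mem_image_of_mem (fun b => g (a, b)) (Finset.mem_univ _)
    simp only [mem_image, mem_univ, true_and] at this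
    obtain ⟨b, hb⟩ := this
    exact (congrArg Prod.fst (hg hb)).symm
  · intro e he
    obtain ⟨a, -, rfl⟩ := Finset.mem_image.1 he
    rw [Finset.card_image_of_injective, Finset.card_univ, Fintype.card_fin]
    intro b b' hb
    exact congrArg Prod.snd (hg hb)
  · intro e he f hf hne
    obtain ⟨a, -, rfl⟩ := Finset.mem_image.1 he
    obtain ⟨a', -, rfl⟩ := Finset.mem_image.1 hf
    rw [Finset.disjoint_left]
    intro x hx hx'
    obtain ⟨b, -, rfl⟩ := Finset.mem_image.1 hx
    obtain ⟨b', -, hb⟩ := Finset.mem_image.1 hx'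
    have := congrArg Prod.fst (hg hb)
    simp only at this
    exact hne (by rw [this])
  · ext x
    simp only [mem_biUnion, mem_image, mem_univ, true_and, id, exists_exists_eq_and, mem_Icc]
    constructor
    · rintro ⟨a, b, rfl⟩
      have := (finProdFinEquiv (a, b)).2
      have hc := mul_comm n r
      simp only [g]
      omega
    · rintro ⟨h1, h2⟩
      have hx : x - 1 < n * r := by rw [mul_comm]; omega
      refine ⟨(finProdFinEquiv.symm ⟨x - 1, hx⟩).1, (finProdFinEquiv.symm ⟨x - 1, hx⟩).2, ?_⟩
      simp only [g, Prod.mk.eta, Equiv.apply_symm_apply]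
      omega

/-- **Proposition.** Every fixed ordered `r`-matching `H` a.a.s. appears as a copy in
`RM_n^(r)`. -/
theorem aas_contains_fixed_copy (r k : ℕ) (hr : 2 ≤ r) (H : Finset (Finset ℕ))
    (hH : IsOrderedMatching r k H) :
    Filter.Tendsto (fun n : ℕ => prob r n (ContainsCopy r k H))
      Filter.atTop (nhds 1) := by
  have hr0 : 0 < r := by omega
  set F := Fintype.card (Equiv.Perm (Fin k × Fin r)) with hF
  have hFpos : 0 < F := Fintype.card_pos
  have hFR : (0 : ℝ) < F := by exact_mod_cast hFpos
  have hlow : ∀ n, 1 - (((F - 1 : ℕ) : ℝ) / F) ^ (n / (k + 1)) ≤ prob r n (ContainsCopy r k H) := by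
    intro n
    have hm : n / (k + 1) * k ≤ n :=
      (Nat.mul_le_mul_left _ (Nat.le_succ k)).trans (Nat.div_mul_le_self n (k + 1))
    have hb := bad_bound hr0 hm hH
    rw [← hF] at hb
    have hc : (0 : ℝ) < (matchingFamilies r n).card := by
      exact_mod_cast (matchingFamilies_nonempty hr0 n).card_pos
    have hadd := Finset.card_filter_add_card_filter_not (s := matchingFamilies r n)
      (ContainsCopy r k H)
    have hb' := (Nat.cast_le (α := ℝ)).2 hb
    have hadd' := congrArg (Nat.cast : ℕ → ℝ) hadd
    push_cast at hb' hadd'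
    unfold prob
    rw [le_div_iff₀ hc, div_pow, sub_mul, one_mul, div_mul_eq_mul_div, sub_le_iff_le_add,
      ← hadd']
    rw [add_le_add_iff_left, le_div_iff₀ (by positivity), hadd', mul_comm ((_ : ℝ) ^ _) (_ : ℝ)]
    exact hb'
  have hup : ∀ n, prob r n (ContainsCopy r k H) ≤ 1 := by
    intro n
    unfold prob
    apply div_le_one_of_le₀ _ (Nat.cast_nonneg _)
    exact_mod_cast Finset.card_filter_le _ _
  have hlt : (((F - 1 : ℕ) : ℝ) / F) < 1 := by
    rw [div_lt_one hFR]
    exact_mod_cast Nat.sub_lt hFpos one_pos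
  have hlim : Filter.Tendsto (fun n : ℕ => 1 - (((F - 1 : ℕ) : ℝ) / F) ^ (n / (k + 1)))
      Filter.atTop (nhds 1) := by
    have h1 := (tendsto_pow_atTop_nhds_zero_of_lt_one (by positivity) hlt).comp
      (Nat.tendsto_div_const_atTop (Nat.succ_ne_zero k))
    simpa using h1.const_sub 1
  exact tendsto_of_tendsto_of_tendsto_of_le_of_le hlim tendsto_const_nhds hlow hup
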